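/- Soundness of the infinite-binary-tree semantics of the name algebra: define the interpretation ⟦·⟧ : Term → (Stream Bool → ℕ × Stream Bool) by ⟦var x⟧(β) = (x, β); ⟦t.l⟧(β) = ⟦t⟧(l·β); ⟦t.r⟧(β) = ⟦t⟧(r·β); ⟦u ∧ v⟧(l·β) = ⟦u⟧(β) and ⟦u ∧ v⟧(r·β) = ⟦v⟧(β), where l, r denote the two Boolean values and · is prepending to a stream. Then a → b implies ⟦a⟧ = ⟦b⟧, and consequently a ≈ b implies ⟦a⟧ = ⟦b⟧. -/

import Mathlib

/-- Terms of the name algebra over atoms in ℕ. -/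
inductive Term : Type
  | var : ℕ → Term
  | projL : Term → Term
  | projR : Term → Term
  | join : Term → Term → Term
deriving DecidableEq

/-- One-step rewrite relation: the three rules `(u ∧ v).l → u`, `(u ∧ v).r → v`,
`(u.l ∧ u.r) → u`, closed under all term contexts. -/
inductive Step : Term → Term → Prop
  | splitL (u v : Term) : Step (Term.projL (Term.join u v)) u
  | splitR (u v : Term) : Step (Term.projR (Term.join u v)) v
  | merge (u : Term) : Step (Term.join (Term.projL u) (Term.projR u)) u
  | congL {a b : Term} : Step a b → Step (Term.projL a) (Term.projL b)
  | congR {a b : Term} : Step a b → Step (Term.projR a) (Term.projR b)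
  | congJoinL {a b : Term} (v : Term) : Step a b → Step (Term.join a v) (Term.join b v)
  | congJoinR {a b : Term} (u : Term) : Step a b → Step (Term.join u a) (Term.join u b)

/-- Reflexive-transitive closure of `Step`. -/
def Steps : Term → Term → Prop := Relation.ReflTransGen Step

/-- A term is in normal form if no rewrite step applies to it. -/
def NormalForm (n : Term) : Prop := ¬ ∃ m, Step n m

/-- `u ≈ v` : the normal forms of `u` and `v` coincide, i.e. they reach a common normal form. -/
def TermEquiv (u v : Term) : Prop := ∃ n, NormalForm n ∧ Steps u n ∧ Steps v n

/-- Interpretation of terms as functions on infinite binary sequences, where the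
Boolean `false` plays the role of `l` and `true` plays the role of `r`. -/
def interp : Term → Stream' Bool → ℕ × Stream' Bool
  | Term.var x, β => (x, β)
  | Term.projL t, β => interp t (Stream'.cons false β)
  | Term.projR t, β => interp t (Stream'.cons true β)
  | Term.join u v, β =>
      if β.head = false then interp u β.tail else interp v β.tail

theorem step_sound_aux {a b : Term} (h : Step a b) : interp a = interp b := by
  induction h with
  | splitL u v => funext β; simp [interp]
  | splitR u v => funext β; simp [interp]
  | merge u =>
    funext β
    have e : Stream'.cons β.head β.tail = β := Stream'.eta β
    cases hb : β.head with
    | false => rw [hb] at e; simp [interp, hb, e]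
    | true => rw [hb] at e; simp [interp, hb, e]
  | congL _ ih => funext β; simp [interp, ih]
  | congR _ ih => funext β; simp [interp, ih]
  | congJoinL v _ ih => funext β; simp [interp, ih]
  | congJoinR u _ ih => funext β; simp [interp, ih]

theorem steps_sound_aux {a b : Term} (h : Steps a b) : interp a = interp b := by
  unfold Steps at h
  induction h with
  | refl => rfl
  | tail _ h ih => exact ih.trans (step_sound_aux h)

/-- Soundness of the infinite-binary-tree semantics: rewriting preserves the
interpretation, hence so does the equivalence `≈`. -/
theorem interp_sound :
    (∀ a b : Term, Step a b → interp a = interp b) ∧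
    (∀ a b : Term, TermEquiv a b → interp a = interp b) := by
  refine ⟨fun a b h => step_sound_aux h, ?_⟩
  rintro a b ⟨n, _, h1, h2⟩
  exact (steps_sound_aux h1).trans (steps_sound_aux h2).symm
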